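/- Let $0 < t_1 < \cdots < t_n$, let $\Sigma$ be the $n \times n$ matrix with $\Sigma_{ij} = u(t_{\min(i,j)}) v(t_{\max(i,j)})$, and let $c \in \mathbb{R}^n$ have components $c_i = e^{B(t_i) - B(0)}$. Then $c^{\mathsf{T}} \Sigma^{-1} c = \left( \int_0^{t_1} e^{2[B(0) - B(\nu)]} \sigma^2(\nu)\, d\nu \right)^{-1}$; in particular the Fisher information about the initial value $X_0$ depends only on the first sampling time $t_1$. -/

import Mathlib

/-!
Write `F s = ∫₀ˢ exp (-2 B) σ²`. Then `Σ i j = v i * v j * F (min (t i) (t j))` with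
`v i = exp (B (t i))`, so the first column of `Σ` is `v 0 * F (t 0)` times `v`, and `c` is also a
multiple of `v`. Hence `c = Σ w` with `w` supported on the first coordinate, and
`cᵀ Σ⁻¹ c = cᵀ w` as soon as `Σ` is invertible. Invertibility is that of the matrix
`F (min (t i) (t j))`, where `F` is positive and strictly increasing on `(0, ∞)`
(`min_kernel_injective`, `integral_weight_pos`).
-/

open MeasureTheory Matrix

/-- A matrix `F (min i j)` with `F` positive and strictly increasing has trivial kernel.
The first row gives `∑ y = 0`; subtracting it from the other rows leaves the same problem for the
values `F (i + 1) - F 0`. -/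
lemma min_kernel_injective (n : ℕ) : ∀ (F : Fin n → ℝ), (∀ i, 0 < F i) → StrictMono F →
    ∀ y : Fin n → ℝ, (∀ i, ∑ j, F (min i j) * y j = 0) → ∀ i, y i = 0 := by
  induction n with
  | zero => intro F _ _ y _ i; exact i.elim0
  | succ n ih =>
    intro F hF hm y hy
    have hsum : ∑ j, y j = 0 := by
      have h0 := hy 0
      have hz : ∀ j : Fin (n + 1), min 0 j = 0 := fun j => min_eq_left (Fin.zero_le j)
      simp only [hz, ← Finset.mul_sum] at h0
      exact (mul_eq_zero.mp h0).resolve_left (hF 0).ne'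
    have hsucc : ∀ i : Fin n, y i.succ = 0 := by
      refine ih (fun i => F i.succ - F 0) (fun i => sub_pos.mpr (hm (Fin.succ_pos i)))
        (fun a b hab => sub_lt_sub_right (hm (Fin.succ_lt_succ_iff.mpr hab)) _)
        (fun i => y i.succ) (fun i => ?_)
      have h1 := hy i.succ
      rw [Fin.sum_univ_succ] at h1 hsum
      have hz : min i.succ (0 : Fin (n + 1)) = 0 := min_eq_right (Fin.zero_le _)
      have hs : ∀ j : Fin n, min i.succ j.succ = (min i j).succ := fun j =>
        ((Fin.strictMono_succ (n := n)).monotone.map_min).symm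
      simp only [hz, hs] at h1
      simp only [sub_mul, Finset.sum_sub_distrib, ← Finset.mul_sum]
      linear_combination h1 - F 0 * hsum
    intro i
    refine Fin.cases ?_ hsucc i
    rw [Fin.sum_univ_succ] at hsum
    simpa [hsucc] using hsum

lemma integral_weight_pos (B σ : ℝ → ℝ) (hB : Continuous B) (hσ : Continuous σ)
    (hσpos : ∀ᵐ s ∂(volume : Measure ℝ), 0 < σ s) (a b : ℝ) (hab : a < b) :
    0 < ∫ ν in a..b, Real.exp (-2 * B ν) * σ ν ^ 2 := by
  have hcont : Continuous fun ν => Real.exp (-2 * B ν) * σ ν ^ 2 := by fun_prop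
  rw [intervalIntegral.integral_pos_iff_support_of_nonneg_ae
    (Filter.Eventually.of_forall fun ν => by positivity) (hcont.intervalIntegrable a b)]
  refine ⟨hab, ?_⟩
  have hsupp : (Function.support fun ν => Real.exp (-2 * B ν) * σ ν ^ 2) =ᵐ[volume]
      (Set.univ : Set ℝ) := by
    rw [Filter.eventuallyEq_univ]
    filter_upwards [hσpos] with s hs
    exact (mul_pos (Real.exp_pos _) (pow_pos hs 2)).ne'
  rw [measure_congr (hsupp.inter (Filter.EventuallyEq.refl _ (Set.Ioc a b)))]
  simpa using hab

/-- with `Σ_{ij} = u (t_{min(i,j)}) v (t_{max(i,j)})` the covariance matrix of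
the process and `c i = exp (B (t i) - B 0)` the gradient of the mean with respect to the
initial value, the Fisher information about `X₀` is
`cᵀ Σ⁻¹ c = (∫_0^{t 0} exp (2 (B 0 - B ν)) σ² ν dν)⁻¹`, depending only on `t 0`. -/
theorem stmt_4 (n : ℕ) (B σ : ℝ → ℝ) (hB : Continuous B) (hσ : Continuous σ)
    (hσpos : ∀ᵐ s ∂(volume : Measure ℝ), 0 < σ s)
    (t : Fin (n + 1) → ℝ) (ht0 : 0 < t 0) (htmono : StrictMono t)
    (S : Matrix (Fin (n + 1)) (Fin (n + 1)) ℝ)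
    (hS : S = Matrix.of fun i j =>
      (Real.exp (B (min (t i) (t j))) *
        ∫ ν in (0:ℝ)..(min (t i) (t j)), Real.exp (-2 * B ν) * σ ν ^ 2) *
      Real.exp (B (max (t i) (t j))))
    (c : Fin (n + 1) → ℝ) (hc : c = fun i => Real.exp (B (t i) - B 0)) :
    c ⬝ᵥ (S⁻¹ *ᵥ c) =
      (∫ ν in (0:ℝ)..(t 0), Real.exp (2 * (B 0 - B ν)) * σ ν ^ 2)⁻¹ := by
  set F : ℝ → ℝ := fun s => ∫ ν in (0:ℝ)..s, Real.exp (-2 * B ν) * σ ν ^ 2 with hFdef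
  have hcont : Continuous fun ν => Real.exp (-2 * B ν) * σ ν ^ 2 := by fun_prop
  have hFmono : StrictMono F := fun a b hab => by
    have h := integral_weight_pos B σ hB hσ hσpos a b hab
    rw [← intervalIntegral.integral_interval_sub_left (hcont.intervalIntegrable 0 b)
      (hcont.intervalIntegrable 0 a)] at h
    exact sub_pos.mp h
  have hFpos : ∀ s, 0 < s → 0 < F s := fun s hs => integral_weight_pos B σ hB hσ hσpos 0 s hs
  have hSij : ∀ i j, S i j = Real.exp (B (t i)) * (F (t (min i j)) * Real.exp (B (t j))) := by
    intro i j
    rw [hS, htmono.monotone.map_min]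
    simp only [Matrix.of_apply, hFdef]
    rcases le_total (t i) (t j) with h | h
    · rw [min_eq_left h, max_eq_right h]; ring
    · rw [min_eq_right h, max_eq_left h]; ring
  have hdet : IsUnit S.det := by
    rw [← Matrix.isUnit_iff_isUnit_det, ← Matrix.mulVec_injective_iff_isUnit]
    refine (injective_iff_map_eq_zero S.mulVecLin).mpr fun x hx => ?_
    have hy := min_kernel_injective (n + 1) (fun i => F (t i))
      (fun i => hFpos _ (ht0.trans_le (htmono.monotone (Fin.zero_le i))))
      (hFmono.comp htmono) (fun j => Real.exp (B (t j)) * x j) (fun i => ?_)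
    · funext i
      exact (mul_eq_zero.mp (hy i)).resolve_left (Real.exp_pos _).ne'
    · have hi : ∑ j, S i j * x j = 0 := congrFun hx i
      simp only [hSij, mul_assoc, ← Finset.mul_sum] at hi
      exact (mul_eq_zero.mp hi).resolve_left (Real.exp_pos _).ne'
  have hF0 : F (t 0) ≠ 0 := (hFpos _ ht0).ne'
  set a : ℝ := Real.exp (-B 0) / (F (t 0) * Real.exp (B (t 0))) with ha
  -- `c` is `a` times the first column of `S`.
  have hcw : S *ᵥ Pi.single 0 a = c := by
    funext i
    have hz : min i 0 = 0 := min_eq_right (Fin.zero_le i)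
    rw [Matrix.mulVec_single, hc]
    simp only [Pi.smul_apply, MulOpposite.smul_eq_mul_unop, MulOpposite.unop_op, Matrix.col_apply,
      hSij, hz, ha, sub_eq_add_neg, Real.exp_add]
    field_simp
  have hinv : S⁻¹ *ᵥ c = Pi.single 0 a := by
    rw [← hcw, Matrix.mulVec_mulVec, Matrix.nonsing_inv_mul _ hdet, Matrix.one_mulVec]
  have hint : (∫ ν in (0:ℝ)..(t 0), Real.exp (2 * (B 0 - B ν)) * σ ν ^ 2)
      = Real.exp (B 0) ^ 2 * F (t 0) := by
    rw [hFdef, ← intervalIntegral.integral_const_mul]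
    congr 1
    funext ν
    rw [← Real.exp_nat_mul, ← mul_assoc, ← Real.exp_add]
    congr 2
    push_cast
    ring
  rw [hinv, dotProduct_single, hint, hc, ha]
  simp only [sub_eq_add_neg, Real.exp_add, Real.exp_neg]
  field_simp
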